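/- arXiv:2102.13193 — 2 statements merged into one kernel-verified Lean document; each statement's English description precedes it below -/
import Mathlib

section
/- Let G = K_n be the complete graph on n vertices, T a spanning tree of G, and c a tree-cycle of T of length k. Then the number of external tree-cycles having non-empty intersection with c equals (n-k)(k-1). -/
open SimpleGraph

/-- The set of edges lying on some path (in a tree: the unique path) between `x` and `y`
in the graph `T`. -/
def pathEdges {V : Type*} (T : SimpleGraph V) (x y : V) : Set (Sym2 V) :=
  {f | ∃ p : T.Walk x y, p.IsPath ∧ f ∈ p.edges}

/-- The edge set of the tree-cycle induced (in the spanning tree `T`) by the cycle-edge `e`: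
the edge `e` itself together with the edges of the (unique) path in `T` between
the endpoints of `e`. -/
def cycEdges {V : Type*} (T : SimpleGraph V) (e : Sym2 V) : Set (Sym2 V) :=
  insert e {f | ∃ x y, e = s(x, y) ∧ f ∈ pathEdges T x y}

/-- The vertex set of the tree-cycle induced (in the spanning tree `T`) by the
cycle-edge `e`. -/
def cycVerts {V : Type*} (T : SimpleGraph V) (e : Sym2 V) : Set V :=
  {v | ∃ x y, e = s(x, y) ∧ ∃ p : T.Walk x y, p.IsPath ∧ v ∈ p.support}

/-- Two tree-cycles (induced by the cycle-edges `e` and `f`) have non-empty intersection: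
some edge of `T` belongs to both of them. -/
def cyclesIntersect {V : Type*} (T : SimpleGraph V) (e f : Sym2 V) : Prop :=
  (cycEdges T e ∩ cycEdges T f ∩ T.edgeSet).Nonempty

/-- The cycle intersection number `∩_T(c)` of the tree-cycle `c` induced by the
cycle-edge `e`: the number of tree-cycles distinct from `c` whose intersection with `c`
is non-empty. -/
noncomputable def cycleInterNum {V : Type*} (G T : SimpleGraph V) (e : Sym2 V) : ℕ :=
  {f | f ∈ G.edgeSet \ T.edgeSet ∧ f ≠ e ∧ cyclesIntersect T e f}.ncard

/-- The tree intersection number `∩_G(T)`: the number of unordered pairs of distinct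
tree-cycles of `T` whose intersection is non-empty. -/
noncomputable def treeInterNum {V : Type*} (G T : SimpleGraph V) : ℕ :=
  {p : Sym2 (Sym2 V) | ∃ e f : Sym2 V, p = s(e, f) ∧ e ≠ f ∧
    e ∈ G.edgeSet \ T.edgeSet ∧ f ∈ G.edgeSet \ T.edgeSet ∧ cyclesIntersect T e f}.ncard

/-- `T` is a star spanning tree of `G` with center `v`. -/
def IsStarSpanningTree {V : Type*} (G T : SimpleGraph V) (v : V) : Prop :=
  T ≤ G ∧ T.IsTree ∧ ∀ u, u ≠ v → T.Adj v u

/-- `closest-point-set(w, c)`: the set of vertices outside the tree-cycle `c` (induced by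
the cycle-edge `e`) whose closest point on `c` (with respect to distance in `T`) is `w`. -/
def closestPointSet {V : Type*} (T : SimpleGraph V) (e : Sym2 V) (w : V) : Set V :=
  {v | v ∉ cycVerts T e ∧ ∀ u ∈ cycVerts T e, T.dist v w ≤ T.dist v u}

/-!
Let `S` be the vertex set of `c`, a subtree of `T`. Every vertex `y` has a gate `w ∈ S`, where the
`T`-paths from `y` first meet `S`: the path from `y` to `x ∈ S` runs outside `S` up to `w` and then
inside `S` from `w` to `x`. So the cycle induced by `s(x, y)`, with `x ∈ S` and `y ∉ S`, shares an
edge with `c` unless `x` is the gate of `y`; this excludes one of the `k` choices of `x` for each of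
the `n - k` vertices `y`.
-/

/-- The unordered pairs with exactly one end in `S` whose `T`-path uses an edge inside `S`. If `S`
is the vertex set of a tree-cycle `c`, these are the cycle-edges of the external tree-cycles that
meet `c`; they are indeed not in `T`, since the path of an edge of `T` leaving `S` is that edge. -/
def externalEdges {V : Type*} (T : SimpleGraph V) (S : Set V) : Set (Sym2 V) :=
  {f | ∃ x y, f = s(x, y) ∧ x ∈ S ∧ y ∉ S ∧ (pathEdges T x y ∩ S.sym2).Nonempty}

/-- `w` is the gate of `y` in `S`: every `T`-path from a vertex `x` of `S` to `y` follows the path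
from `x` to `w` and uses no further edge inside `S`. In a tree, with `S` a subtree, `w` is the
vertex of `S` closest to `y`. -/
def IsGate {V : Type*} (T : SimpleGraph V) (S : Set V) (y w : V) : Prop :=
  w ∈ S ∧ ∀ x ∈ S, pathEdges T x y ∩ S.sym2 = pathEdges T x w

section TreeCycles

variable {V : Type*} {T : SimpleGraph V} {S : Set V} {a b w x y : V}

theorem pathEdges_subset_edgeSet : pathEdges T x y ⊆ T.edgeSet := by
  rintro f ⟨p, -, hf⟩
  exact p.edges_subset_edgeSet hf

theorem pathEdges_comm (x y : V) : pathEdges T x y = pathEdges T y x := by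
  have pathEdges_subset (u v : V) : pathEdges T u v ⊆ pathEdges T v u := by
    rintro f ⟨p, hp, hf⟩
    exact ⟨p.reverse, hp.reverse, by simpa using hf⟩
  exact (pathEdges_subset x y).antisymm (pathEdges_subset y x)

theorem pathEdges_nonempty_iff (hxy : T.Reachable x y) : (pathEdges T x y).Nonempty ↔ x ≠ y := by
  constructor
  · rintro ⟨f, p, hp, hf⟩ rfl
    simp [(Walk.isPath_iff_nil.1 hp).eq_nil] at hf
  · intro hne
    obtain ⟨p, hp⟩ := hxy.exists_isPath
    cases p with
    | nil => exact absurd rfl hne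
    | @cons _ v _ h q => exact ⟨s(x, v), _, hp, by simp⟩

theorem mem_pathEdges_of_adj (h : T.Adj x y) : s(x, y) ∈ pathEdges T x y :=
  ⟨h.toWalk, .of_adj h, by simp⟩

theorem cycEdges_inter_edgeSet : cycEdges T s(x, y) ∩ T.edgeSet = pathEdges T x y := by
  ext f
  constructor
  · rintro ⟨rfl | ⟨u, v, huv, hf⟩, hfT⟩
    · exact mem_pathEdges_of_adj hfT
    · rcases Sym2.eq_iff.1 huv with ⟨rfl, rfl⟩ | ⟨rfl, rfl⟩
      · exact hf
      · rwa [pathEdges_comm]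
  · exact fun hf => ⟨.inr ⟨x, y, rfl, hf⟩, pathEdges_subset_edgeSet hf⟩

theorem cyclesIntersect_mk_iff :
    cyclesIntersect T s(a, b) s(x, y) ↔ (pathEdges T a b ∩ pathEdges T x y).Nonempty := by
  rw [cyclesIntersect, Set.inter_inter_distrib_right, cycEdges_inter_edgeSet,
    cycEdges_inter_edgeSet]

theorem exists_isPath_edges_disjoint_sym2 (p : T.Walk y x) (hx : x ∈ S) :
    ∃ w ∈ S, ∃ r : T.Walk y w, r.IsPath ∧ ∀ f ∈ r.edges, f ∉ S.sym2 := by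
  classical
  suffices ∃ w ∈ S, ∃ r : T.Walk y w, ∀ f ∈ r.edges, f ∉ S.sym2 by
    obtain ⟨w, hw, r, hr⟩ := this
    exact ⟨w, hw, r.bypass, r.bypass_isPath, fun f hf => hr f (r.edges_bypass_subset_edges hf)⟩
  induction p with
  | nil => exact ⟨_, hx, .nil, by simp⟩
  | @cons y _ _ h _ ih =>
    by_cases hy : y ∈ S
    · exact ⟨y, hy, .nil, by simp⟩
    · obtain ⟨w, hw, r, hr⟩ := ih hx
      refine ⟨w, hw, .cons h r, ?_⟩
      simpa [hy] using hr

theorem exists_isPath_edges_subset_sym2 (hS : (T.induce S).Preconnected) (hw : w ∈ S) (hx : x ∈ S) :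
    ∃ t : T.Walk w x, t.IsPath ∧ ∀ f ∈ t.edges, f ∈ S.sym2 := by
  obtain ⟨t, ht⟩ := (hS ⟨w, hw⟩ ⟨x, hx⟩).exists_isPath
  let incl : T.induce S →g T := (Embedding.induce S).toHom
  have edges_subset_sym2 : ∀ f ∈ (t.map incl).edges, f ∈ S.sym2 := by
    simp only [Walk.edges_map, List.mem_map]
    rintro _ ⟨⟨u, v⟩, -, rfl⟩
    exact ⟨u.2, v.2⟩
  exact ⟨t.map incl, ht.map Subtype.val_injective, edges_subset_sym2⟩

theorem pathEdges_eq_edges (hT : T.IsAcyclic) {p : T.Walk x y} (hp : p.IsPath) :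
    pathEdges T x y = {f | f ∈ p.edges} := by
  ext f
  refine ⟨?_, fun hf => ⟨p, hp, hf⟩⟩
  rintro ⟨q, hq, hf⟩
  have hqp : (⟨q, hq⟩ : T.Path x y) = ⟨p, hp⟩ := (hT.subsingleton_path x y).elim _ _
  obtain rfl : q = p := congrArg Subtype.val hqp
  exact hf

theorem cycVerts_eq_support (hT : T.IsAcyclic) {p : T.Walk a b} (hp : p.IsPath) :
    cycVerts T s(a, b) = {v | v ∈ p.support} := by
  have support_eq {q : T.Walk a b} (hq : q.IsPath) : q.support = p.support :=
    congrArg (fun q : T.Path a b => q.1.support)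
      ((hT.subsingleton_path a b).elim ⟨q, hq⟩ ⟨p, hp⟩)
  ext v
  refine ⟨?_, fun hv => ⟨a, b, rfl, p, hp, hv⟩⟩
  rintro ⟨x, y, hxy, q, hq, hv⟩
  rcases Sym2.eq_iff.1 hxy with ⟨rfl, rfl⟩ | ⟨rfl, rfl⟩
  · exact support_eq hq ▸ hv
  · rw [Set.mem_ofPred_eq, ← support_eq hq.reverse]
    simpa using hv

theorem connected_induce_cycVerts (hT : T.IsTree) (e : Sym2 V) :
    (T.induce (cycVerts T e)).Connected := by
  induction e with | _ a b =>
  obtain ⟨p, hp⟩ := hT.connected.exists_isPath a b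
  rw [cycVerts_eq_support hT.isAcyclic hp]
  exact p.connected_induce_support

theorem pathEdges_eq_edgeSet_inter_sym2 (hT : T.IsTree) (a b : V) :
    pathEdges T a b = T.edgeSet ∩ (cycVerts T s(a, b)).sym2 := by
  classical
  obtain ⟨p, hp⟩ := hT.connected.exists_isPath a b
  rw [pathEdges_eq_edges hT.isAcyclic hp, cycVerts_eq_support hT.isAcyclic hp]
  ext ⟨u, v⟩
  constructor
  · exact fun hf => ⟨p.edges_subset_edgeSet hf,
      p.fst_mem_support_of_mem_edges hf, p.snd_mem_support_of_mem_edges hf⟩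
  · rintro ⟨huv, hu, hv⟩
    have mem_edges_of_walk : ∀ q : T.Walk u v, s(u, v) ∈ q.edges :=
      isBridge_iff_forall_walk_mem_edges.1 (isAcyclic_iff_forall_isBridge.1 hT.isAcyclic huv)
    have huv_mem := mem_edges_of_walk ((p.takeUntil u hu).reverse.append (p.takeUntil v hv))
    rw [Walk.edges_append, List.mem_append, Walk.edges_reverse, List.mem_reverse] at huv_mem
    exact huv_mem.elim (fun h => p.edges_takeUntil_subset_edges hu h)
      (fun h => p.edges_takeUntil_subset_edges hv h)

theorem cyclesIntersect_iff_inter_sym2_nonempty (hT : T.IsTree) (e : Sym2 V) (x y : V) :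
    cyclesIntersect T e s(x, y) ↔ (pathEdges T x y ∩ (cycVerts T e).sym2).Nonempty := by
  induction e with | _ a b =>
  rw [cyclesIntersect_mk_iff, pathEdges_eq_edgeSet_inter_sym2 hT a b, Set.inter_comm,
    ← Set.inter_assoc, Set.inter_eq_left.2 pathEdges_subset_edgeSet]

theorem exists_isGate (hT : T.IsTree) (hS : (T.induce S).Connected) (y : V) :
    ∃ w, IsGate T S y w := by
  obtain ⟨z, hz⟩ := hS.nonempty
  obtain ⟨p⟩ := hT.connected y z
  obtain ⟨w, hw, r, hr, hrS⟩ := exists_isPath_edges_disjoint_sym2 p hz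
  refine ⟨w, hw, fun x hx => ?_⟩
  obtain ⟨t, ht, htS⟩ := exists_isPath_edges_subset_sym2 hS.preconnected hw hx
  have append_isPath : (r.append t).IsPath := by
    rw [hT.isAcyclic.isPath_iff_isTrail, Walk.isTrail_append]
    exact ⟨hr.isTrail, ht.isTrail, fun f hfr hft => hrS f hfr (htS f hft)⟩
  rw [pathEdges_comm x y, pathEdges_comm x w, pathEdges_eq_edges hT.isAcyclic append_isPath,
    pathEdges_eq_edges hT.isAcyclic ht]
  ext f
  simp only [Walk.edges_append, List.mem_append, Set.mem_inter_iff, Set.mem_ofPred_eq]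
  exact ⟨fun ⟨hf, hfS⟩ => hf.resolve_left fun hfr => hrS f hfr hfS, fun hf => ⟨.inr hf, htS f hf⟩⟩

theorem IsGate.inter_sym2_nonempty_iff (hw : IsGate T S y w) (hT : T.Connected) (hx : x ∈ S) :
    (pathEdges T x y ∩ S.sym2).Nonempty ↔ x ≠ w := by
  rw [hw.2 x hx, pathEdges_nonempty_iff (hT x w)]

theorem externalEdges_eq_image_of_isGate (hT : T.Connected) {gate : V → V}
    (hgate : ∀ y, IsGate T S y (gate y)) :
    externalEdges T S = Sym2.mk.uncurry '' ((S ×ˢ Sᶜ) \ (fun y => (gate y, y)) '' Sᶜ) := by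
  ext f
  constructor
  · rintro ⟨x, y, rfl, hx, hy, hinter⟩
    refine ⟨(x, y), ⟨⟨hx, hy⟩, ?_⟩, rfl⟩
    rintro ⟨_, -, ⟨⟩⟩
    exact ((hgate y).inter_sym2_nonempty_iff hT hx).1 hinter rfl
  · rintro ⟨⟨x, y⟩, ⟨⟨hx, hy⟩, hne⟩, rfl⟩
    refine ⟨x, y, rfl, hx, hy, ((hgate y).inter_sym2_nonempty_iff hT hx).2 ?_⟩
    rintro rfl
    exact hne ⟨y, hy, rfl⟩

theorem notMem_edgeSet_of_mem_externalEdges (hT : T.IsAcyclic) {f : Sym2 V}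
    (hf : f ∈ externalEdges T S) : f ∉ T.edgeSet := by
  obtain ⟨x, y, rfl, -, hy, g, hg, hgS⟩ := hf
  intro (hxy : T.Adj x y)
  have hgxy : g = s(x, y) := by
    simpa [pathEdges_eq_edges hT (Walk.IsPath.of_adj hxy)] using hg
  exact hy (hgxy ▸ hgS).2

theorem setOf_external_cyclesIntersect_eq (hT : T.IsTree) (e : Sym2 V) :
    {f | f ∈ (⊤ : SimpleGraph V).edgeSet \ T.edgeSet ∧ f ≠ e ∧ cyclesIntersect T e f ∧
      ∃ x y, f = s(x, y) ∧ x ∈ cycVerts T e ∧ y ∉ cycVerts T e} =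
    externalEdges T (cycVerts T e) := by
  ext f
  constructor
  · rintro ⟨-, -, hinter, x, y, rfl, hx, hy⟩
    exact ⟨x, y, rfl, hx, hy, (cyclesIntersect_iff_inter_sym2_nonempty hT e x y).1 hinter⟩
  · intro hf
    have hfT := notMem_edgeSet_of_mem_externalEdges hT.isAcyclic hf
    obtain ⟨x, y, rfl, hx, hy, hinter⟩ := hf
    refine ⟨⟨fun (hxy : x = y) => hy (hxy ▸ hx), hfT⟩, ?_,
      (cyclesIntersect_iff_inter_sym2_nonempty hT e x y).2 hinter, x, y, rfl, hx, hy⟩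
    rintro rfl
    obtain ⟨p, hp⟩ := hT.connected.exists_isPath x y
    exact hy ⟨x, y, rfl, p, hp, p.end_mem_support⟩

end TreeCycles

theorem injOn_sym2Mk_prod_compl {α : Type*} (S : Set α) :
    Set.InjOn Sym2.mk.uncurry (S ×ˢ Sᶜ) := by
  rintro ⟨x, y⟩ ⟨hx, -⟩ ⟨x', y'⟩ ⟨-, hy'⟩ h
  rcases Sym2.eq_iff.1 h with ⟨rfl, rfl⟩ | ⟨rfl, rfl⟩
  · rfl
  · exact absurd hx hy'

theorem ncard_prod_compl_sdiff_graph {α : Type*} [Finite α] {S : Set α} {w : α → α}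
    (hw : ∀ y, w y ∈ S) :
    (((S ×ˢ Sᶜ) \ (fun y => (w y, y)) '' Sᶜ).ncard : ℚ) =
      ((Nat.card α : ℚ) - S.ncard) * ((S.ncard : ℚ) - 1) := by
  have graph_subset : (fun y => (w y, y)) '' Sᶜ ⊆ S ×ˢ Sᶜ := by
    rintro _ ⟨y, hy, rfl⟩
    exact ⟨hw y, hy⟩
  have ncard_compl_eq : (Sᶜ.ncard : ℚ) = Nat.card α - S.ncard := by
    rw [← Set.ncard_add_ncard_compl S]
    push_cast
    ring
  rw [Set.cast_ncard_sdiff graph_subset (Set.toFinite _), Set.ncard_prod,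
    Set.ncard_image_of_injective _ fun y y' h => congrArg Prod.snd h, Nat.cast_mul, ncard_compl_eq]
  ring

theorem stmt_2_general {V : Type*} [Finite V] {T : SimpleGraph V} (hT : T.IsTree) {S : Set V}
    (hS : (T.induce S).Connected) :
    ((externalEdges T S).ncard : ℚ) = ((Nat.card V : ℚ) - S.ncard) * ((S.ncard : ℚ) - 1) := by
  choose gate hgate using exists_isGate hT hS
  rw [externalEdges_eq_image_of_isGate hT.connected hgate,
    ((injOn_sym2Mk_prod_compl S).mono Set.sdiff_subset).ncard_image,
    ncard_prod_compl_sdiff_graph fun y => (hgate y).1]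

/-- In the complete graph `K_n`, for a spanning tree `T` and a tree-cycle
`c` of length `k` (induced by the cycle-edge `e`), the number of external tree-cycles
(exactly one endpoint of the inducing cycle-edge on `c`) having non-empty intersection
with `c` is `(n-k)(k-1)`. -/
theorem stmt_2 {V : Type*} [Fintype V] (n : ℕ) (hn : Fintype.card V = n)
    (T : SimpleGraph V) (hle : T ≤ (⊤ : SimpleGraph V)) (hT : T.IsTree)
    (e : Sym2 V) (he : e ∈ (⊤ : SimpleGraph V).edgeSet \ T.edgeSet)
    (k : ℕ) (hk : (cycVerts T e).ncard = k) :
    (({f | f ∈ (⊤ : SimpleGraph V).edgeSet \ T.edgeSet ∧ f ≠ e ∧ cyclesIntersect T e f ∧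
        ∃ x y, f = s(x, y) ∧ x ∈ cycVerts T e ∧ y ∉ cycVerts T e} : Set (Sym2 V)).ncard : ℚ)
      = ((n : ℚ) - k) * ((k : ℚ) - 1) := by
  rw [setOf_external_cyclesIntersect_eq hT, stmt_2_general hT (connected_induce_cycVerts hT e),
    Nat.card_eq_fintype_card, hn, hk]
end

section
/- Let G = K_n be the complete graph on n vertices. Then for every spanning tree T of G and every tree-cycle c of T, the cycle intersection number satisfies ∩_T(c) ≥ 2(n - 3); that is, tree-cycles of a star spanning tree achieve the minimum cycle intersection number among all tree-cycles of all spanning trees of K_n. -/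
open SimpleGraph

/-!
Let `P` be the path of `T` joining the ends of the cycle-edge `e`, of length `l`, and delete the
edges of `P` from `T`. Two vertices in different components of the result are joined in `T` through
an edge of `P`, so they span an edge of `P`, the edge `e`, or a cycle-edge whose tree-cycle meets
that of `e`. The `l + 1` vertices of `P` lie in different components, so they span
`(l + 1).choose 2` such pairs, and every other vertex is separated from at least `l` of them. Hence
`∩_T(c) ≥ (l + 1).choose 2 + l * (n - l - 1) - (l + 1)`, and for `2 ≤ l < n` the right-hand side is
smallest at `l = 2`, where it equals `2 * (n - 3)`.
-/

section Counting

lemma choose_two_succ (k : ℕ) : (k + 1).choose 2 = k + k.choose 2 := by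
  rw [Nat.choose_succ_succ', Nat.choose_one_right]

lemma two_mul_le_choose_two_add_mul {l n : ℕ} (hl : 2 ≤ l) (hn : l + 1 ≤ n) :
    2 * n ≤ l.choose 2 + l * (n - (l + 1)) + 5 := by
  obtain ⟨j, rfl⟩ := Nat.exists_eq_add_of_le' hl
  obtain ⟨m, rfl⟩ := Nat.exists_eq_add_of_le hn
  rw [Nat.add_sub_cancel_left, choose_two_succ, choose_two_succ]
  nlinarith

variable {V κ : Type*} [Fintype V] [DecidableEq V]

lemma choose_two_le_card_edgeFinset_filter_mem_sym2 {G : SimpleGraph V} [DecidableRel G.Adj]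
    {S : Finset V} (hS : G.IsClique (S : Set V)) :
    S.card.choose 2 ≤ (G.edgeFinset.filter (· ∈ S.sym2)).card := by
  rw [← Sym2.card_image_offDiag S]
  refine Finset.card_le_card (Finset.image_subset_iff.2 fun q hq => ?_)
  obtain ⟨h₁, h₂, hne⟩ := Finset.mem_offDiag.1 hq
  exact Finset.mem_filter.2 ⟨mem_edgeFinset.2 (hS h₁ h₂ hne), Finset.mk_mem_sym2_iff.2 ⟨h₁, h₂⟩⟩

lemma mul_card_compl_le_card_edgeFinset_filter_notMem_sym2 {G : SimpleGraph V}
    [DecidableRel G.Adj] {S : Finset V} {d : ℕ}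
    (hd : ∀ v ∉ S, d ≤ (S.filter (G.Adj v)).card) :
    d * Sᶜ.card ≤ (G.edgeFinset.filter (· ∉ S.sym2)).card := by
  let boundary : Finset (Σ _ : V, V) := Sᶜ.sigma fun v => S.filter (G.Adj v)
  have mem_boundary (q : Σ _ : V, V) :
      q ∈ boundary ↔ q.1 ∉ S ∧ q.2 ∈ S ∧ G.Adj q.1 q.2 := by
    simp [boundary]
  have le_card_boundary : d * Sᶜ.card ≤ boundary.card := by
    rw [Finset.card_sigma, mul_comm]
    exact Finset.card_nsmul_le_sum _ _ _ fun v hv => hd v (Finset.mem_compl.1 hv)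
  refine le_card_boundary.trans
    (Finset.card_le_card_of_injOn (fun q => s(q.1, q.2)) (fun q hq => ?_) ?_)
  · obtain ⟨h₁, -, hadj⟩ := (mem_boundary q).1 hq
    exact Finset.mem_filter.2
      ⟨mem_edgeFinset.2 hadj, fun h => h₁ (Finset.mk_mem_sym2_iff.1 h).1⟩
  · rintro ⟨v, w⟩ hq ⟨v', w'⟩ hq' heq
    rw [Finset.mem_coe, mem_boundary] at hq hq'
    rcases Sym2.eq_iff.1 heq with ⟨rfl, rfl⟩ | ⟨rfl, rfl⟩
    · rfl
    · exact absurd hq'.2.1 hq.1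

lemma choose_two_add_mul_card_compl_le_card_edgeFinset {G : SimpleGraph V} [DecidableRel G.Adj]
    {S : Finset V} {d : ℕ} (hS : G.IsClique (S : Set V))
    (hd : ∀ v ∉ S, d ≤ (S.filter (G.Adj v)).card) :
    S.card.choose 2 + d * Sᶜ.card ≤ G.edgeFinset.card := by
  rw [← Finset.card_filter_add_card_filter_not (s := G.edgeFinset) (· ∈ S.sym2)]
  exact add_le_add (choose_two_le_card_edgeFinset_filter_mem_sym2 hS)
    (mul_card_compl_le_card_edgeFinset_filter_notMem_sym2 hd)

lemma choose_two_add_mul_card_compl_le_ncard_edgeSet_comap_top {c : V → κ} {S : Finset V}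
    (hS : Set.InjOn c S) :
    S.card.choose 2 + (S.card - 1) * Sᶜ.card ≤
      ((⊤ : SimpleGraph κ).comap c).edgeSet.ncard := by
  classical
  rw [← coe_edgeFinset, Set.ncard_coe_finset]
  refine choose_two_add_mul_card_compl_le_card_edgeFinset
    (fun v hv w hw hne h => hne (hS hv hw h)) fun v _ => ?_
  have card_sameColor : (S.filter fun w => c v = c w).card ≤ 1 := by
    refine Finset.card_le_one.2 fun w hw w' hw' => ?_
    rw [Finset.mem_filter] at hw hw'
    exact hS hw.1 hw'.1 (hw.2.symm.trans hw'.2)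
  have card_split := S.card_filter_add_card_filter_not fun w => c v = c w
  simp only [comap_adj, top_adj, ne_eq]
  omega

end Counting

section TreePath

variable {V : Type*} {T : SimpleGraph V} {u v x y : V} {p : T.Walk x y}

lemma exists_isPath_edges_subset_of_mem_support (hp : p.IsPath) (hu : u ∈ p.support)
    (hv : v ∈ p.support) : ∃ q : T.Walk u v, q.IsPath ∧ q.edges ⊆ p.edges := by
  classical
  rw [← p.take_spec hu, Walk.mem_support_append_iff] at hv
  rcases hv with hv | hv
  · refine ⟨((p.takeUntil u hu).dropUntil v hv).reverse,
      ((hp.takeUntil hu).dropUntil hv).reverse, ?_⟩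
    rw [Walk.edges_reverse, List.reverse_subset]
    exact List.Subset.trans (Walk.edges_dropUntil_subset_edges _ hv)
      (p.edges_takeUntil_subset_edges hu)
  · exact ⟨(p.dropUntil u hu).takeUntil v hv, (hp.dropUntil hu).takeUntil hv,
      List.Subset.trans (Walk.edges_takeUntil_subset_edges _ hv)
        (p.edges_dropUntil_subset_edges hu)⟩

lemma eq_of_mem_support_of_reachable_deleteEdges (hT : T.IsAcyclic) (hp : p.IsPath)
    (hu : u ∈ p.support) (hv : v ∈ p.support)
    (huv : (T.deleteEdges p.edgeSet).Reachable u v) : u = v := by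
  obtain ⟨q, hq, hqp⟩ := exists_isPath_edges_subset_of_mem_support hp hu hv
  obtain ⟨r, hr⟩ := huv.exists_isPath
  have hqr : q = r.mapLe (deleteEdges_le _) :=
    congrArg Subtype.val ((hT.subsingleton_path u v).elim ⟨q, hq⟩ ⟨_, hr.mapLe _⟩)
  cases r with
  | nil => rfl
  | cons h r => exact absurd (hqp (by simp [hqr])) (deleteEdges_adj.1 h).2

lemma cyclesIntersect_of_not_reachable_deleteEdges (hT : T.Connected) (hp : p.IsPath)
    (huv : ¬ (T.deleteEdges p.edgeSet).Reachable u v) : cyclesIntersect T s(x, y) s(u, v) := by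
  obtain ⟨q, hq⟩ := hT.exists_isPath u v
  obtain ⟨f, hfp, hfq⟩ := q.exists_mem_edges_of_not_reachable_deleteEdges huv
  exact ⟨f, ⟨.inr ⟨x, y, rfl, p, hp, hfp⟩, .inr ⟨u, v, rfl, q, hq, hfq⟩⟩,
    q.edges_subset_edgeSet hfq⟩

lemma ncard_insert_edgeSet_le (p : T.Walk x y) (e : Sym2 V) :
    (insert e p.edgeSet).ncard ≤ p.length + 1 := by
  classical
  refine (Set.ncard_insert_le e p.edgeSet).trans (Nat.add_le_add_right ?_ 1)
  rw [← p.coe_edges_toFinset, Set.ncard_coe_finset, ← p.length_edges]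
  exact p.edges.toFinset_card_le

lemma ncard_edgeSet_comap_connectedComponentMk_le_cycleInterNum_add [Finite V] (hT : T.Connected)
    (hp : p.IsPath) :
    ((⊤ : SimpleGraph _).comap (T.deleteEdges p.edgeSet).connectedComponentMk).edgeSet.ncard ≤
      cycleInterNum ⊤ T s(x, y) + (p.length + 1) := by
  refine (Set.ncard_le_ncard_sdiff_add_ncard _ (insert s(x, y) p.edgeSet)).trans
    (add_le_add (Set.ncard_le_ncard ?_) (ncard_insert_edgeSet_le p _))
  rintro ⟨u, v⟩ ⟨huv, hnot⟩
  have hnr : ¬ (T.deleteEdges p.edgeSet).Reachable u v := fun h =>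
    huv (ConnectedComponent.sound h)
  rw [Set.mem_insert_iff, not_or] at hnot
  refine ⟨⟨fun h : u = v => hnr (h ▸ .refl u), fun h : T.Adj u v => ?_⟩, hnot.1,
    cyclesIntersect_of_not_reachable_deleteEdges hT hp hnr⟩
  exact hnr (deleteEdges_adj.2 ⟨h, hnot.2⟩).reachable

lemma choose_two_add_mul_le_cycleInterNum_add_one [Fintype V] (hT : T.IsTree) (hp : p.IsPath) :
    p.length.choose 2 + p.length * (Fintype.card V - (p.length + 1)) ≤
      cycleInterNum ⊤ T s(x, y) + 1 := by
  classical
  have card_support : p.support.toFinset.card = p.length + 1 := by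
    rw [List.toFinset_card_of_nodup hp.support_nodup, p.length_support]
  have hinj : Set.InjOn (T.deleteEdges p.edgeSet).connectedComponentMk p.support.toFinset :=
    fun u hu v hv huv => eq_of_mem_support_of_reachable_deleteEdges hT.isAcyclic hp
      (List.mem_toFinset.1 hu) (List.mem_toFinset.1 hv) (ConnectedComponent.exact huv)
  have hcount := choose_two_add_mul_card_compl_le_ncard_edgeSet_comap_top hinj
  have hcycle := ncard_edgeSet_comap_connectedComponentMk_le_cycleInterNum_add hT.connected hp
  rw [Finset.card_compl, card_support, Nat.add_sub_cancel, choose_two_succ] at hcount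
  omega

lemma two_le_length_of_ne_of_not_adj (p : T.Walk x y) (hne : x ≠ y) (hadj : ¬ T.Adj x y) :
    2 ≤ p.length := by
  by_contra! h
  interval_cases hlen : p.length
  · exact hne (Walk.eq_of_length_eq_zero hlen)
  · exact hadj (Walk.adj_of_length_eq_one hlen)

end TreePath

/-- In the complete graph `K_n`, every tree-cycle `c` of every spanning
tree `T` satisfies `∩_T(c) ≥ 2(n-3)`; that is, the tree-cycles of a star spanning tree
achieve the minimum cycle intersection number. -/
theorem stmt_7 {V : Type*} [Fintype V] (n : ℕ) (hn : Fintype.card V = n)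
    (T : SimpleGraph V) (hle : T ≤ (⊤ : SimpleGraph V)) (hT : T.IsTree)
    (e : Sym2 V) (he : e ∈ (⊤ : SimpleGraph V).edgeSet \ T.edgeSet) :
    2 * ((n : ℚ) - 3) ≤ (cycleInterNum (⊤ : SimpleGraph V) T e : ℚ) := by
  induction e using Sym2.ind with
  | _ x y =>
  obtain ⟨p, hp⟩ := hT.connected.exists_isPath x y
  have two_le_length : 2 ≤ p.length := two_le_length_of_ne_of_not_adj p he.1 he.2
  have length_lt : p.length + 1 ≤ n := hn ▸ hp.length_lt
  have hcycle := choose_two_add_mul_le_cycleInterNum_add_one hT hp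
  have harith := two_mul_le_choose_two_add_mul two_le_length length_lt
  have hbound : 2 * n ≤ cycleInterNum ⊤ T s(x, y) + 6 := by
    rw [hn] at hcycle
    omega
  have hbound_rat : 2 * (n : ℚ) ≤ cycleInterNum ⊤ T s(x, y) + 6 := mod_cast hbound
  linarith
end
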